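/- Let n ≥ 1 and let K, T ⊆ ℝⁿ be compact sets with T nonempty and with the Minkowski difference K ⊖ T nonempty. Then vol(K ⊖ T)^{1/n} ≤ vol(K)^{1/n} − vol(T)^{1/n}. -/

import Mathlib

open MeasureTheory

/-- The Minkowski difference `A ⊖ B = {x : x − B ⊆ int(A)}`. -/
def minkDiff {n : ℕ} (A B : Set (EuclideanSpace ℝ (Fin n))) :
    Set (EuclideanSpace ℝ (Fin n)) :=
  {x | ∀ b ∈ B, x - b ∈ interior A}

/-!
If `x ∈ K ⊖ T` then `x - T ⊆ int K`, so `(K ⊖ T) + (-T) ⊆ K` and the bound is an instance of the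
Brunn–Minkowski inequality `vol(A)^{1/n} + vol(B)^{1/n} ≤ vol(A + B)^{1/n}`.

Brunn–Minkowski follows from the Prékopa–Leindler inequality
`(∫ f)^s (∫ g)^t ≤ ∫ h`, valid when `s + t = 1` and `f(x)^s g(y)^t ≤ h(s x + t y)`: rescale `A` and
`B` to have volume one and apply it to indicator functions. Prékopa–Leindler tensorizes by Fubini,
which reduces it to the real line. There, after normalizing `sup f = sup g = 1`, the superlevel sets
satisfy `s {f > c} + t {g > c} ⊆ {h > c}` with both sets on the left nonempty for `c < 1`, so the
one-dimensional Brunn–Minkowski inequality, integrated over `c`, gives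
`s ∫ f + t ∫ g ≤ ∫ h`, and the weighted AM–GM inequality concludes.
-/

open Set Module
open scoped ENNReal Pointwise

section RealLine

theorem volume_add_volume_le_of_isCompact {A B : Set ℝ} (hA : IsCompact A) (hB : IsCompact B)
    (hAne : A.Nonempty) (hBne : B.Nonempty) : volume A + volume B ≤ volume (A + B) := by
  obtain ⟨a, haA, ha⟩ := hA.exists_isGreatest hAne
  obtain ⟨b, hbB, hb⟩ := hB.exists_isLeast hBne
  -- `A + b` lies to the left of `a + b` and `a + B` lies to its right.
  have hdisj : AEDisjoint volume (A + {b}) ({a} + B) := by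
    refine measure_mono_null (t := {a + b}) ?_ Real.volume_singleton
    rw [add_singleton, singleton_add]
    rintro _ ⟨⟨x, hx, rfl⟩, ⟨y, hy, hxy⟩⟩
    exact le_antisymm (by linarith [ha hx]) (by linarith [hb hy])
  have hmeas : NullMeasurableSet ({a} + B) volume :=
    (isCompact_singleton.add hB).measurableSet.nullMeasurableSet
  calc volume A + volume B = volume (A + {b}) + volume ({a} + B) := by simp
    _ = volume (A + {b} ∪ ({a} + B)) := (measure_union₀ hmeas hdisj).symm
    _ ≤ volume (A + B) := measure_mono <| union_subset
      (add_subset_add_left <| singleton_subset_iff.2 hbB)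
      (add_subset_add_right <| singleton_subset_iff.2 haA)

theorem volume_add_volume_le {A B : Set ℝ} (hA : MeasurableSet A) (hB : MeasurableSet B)
    (hAne : A.Nonempty) (hBne : B.Nonempty) : volume A + volume B ≤ volume (A + B) := by
  obtain ⟨a, ha⟩ := hAne
  obtain ⟨b, hb⟩ := hBne
  rw [hA.measure_eq_iSup_isCompact, hB.measure_eq_iSup_isCompact]
  simp only [iSup_and']
  refine ENNReal.biSup_add_biSup_le' ⟨∅, by simp⟩ ⟨∅, by simp⟩ ?_
  rintro P ⟨hPA, hP⟩ Q ⟨hQB, hQ⟩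
  calc volume P + volume Q ≤ volume (insert a P) + volume (insert b Q) := by
        gcongr <;> exact subset_insert _ _
    _ ≤ volume (insert a P + insert b Q) := volume_add_volume_le_of_isCompact (hP.insert a)
        (hQ.insert b) (insert_nonempty _ _) (insert_nonempty _ _)
    _ ≤ volume (A + B) :=
        measure_mono <| add_subset_add (insert_subset ha hPA) (insert_subset hb hQB)

theorem ofReal_mul_volume_add_le {s t : ℝ} (hs : 0 < s) (ht : 0 < t) {A B : Set ℝ}
    (hA : MeasurableSet A) (hB : MeasurableSet B) (hAne : A.Nonempty) (hBne : B.Nonempty) :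
    ENNReal.ofReal s * volume A + ENNReal.ofReal t * volume B ≤ volume (s • A + t • B) := by
  simpa [Measure.addHaar_smul, abs_of_pos, hs, ht] using
    volume_add_volume_le (hA.const_smul_of_ne_zero hs.ne') (hB.const_smul_of_ne_zero ht.ne')
      (hAne.smul_set (a := s)) (hBne.smul_set (a := t))

end RealLine

section ENNReal

theorem rpow_mul_rpow_le_ofReal_mul_add {s t : ℝ} (hs : 0 < s) (ht : 0 < t) (hst : s + t = 1)
    (a b : ℝ≥0∞) : a ^ s * b ^ t ≤ ENNReal.ofReal s * a + ENNReal.ofReal t * b := by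
  have hconj : s⁻¹.HolderConjugate t⁻¹ :=
    Real.holderConjugate_iff.2 ⟨(one_lt_inv₀ hs).2 (by linarith), by simpa⟩
  have := ENNReal.young_inequality (a ^ s) (b ^ t) hconj
  rw [ENNReal.rpow_rpow_inv hs.ne', ENNReal.rpow_rpow_inv ht.ne', ENNReal.ofReal_inv_of_pos hs,
    ENNReal.ofReal_inv_of_pos ht] at this
  simpa [div_eq_mul_inv, mul_comm] using this

theorem rpow_iSup_eq_iSup_rpow {ι : Sort*} {r : ℝ} (hr : 0 < r) (u : ι → ℝ≥0∞) :
    (⨆ i, u i) ^ r = ⨆ i, u i ^ r :=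
  (ENNReal.orderIsoRpow r hr).map_iSup u

theorem exists_pos_eq_ofReal_pow {d : ℕ} (hd : d ≠ 0) {x : ℝ≥0∞} (hx0 : x ≠ 0) (hx : x ≠ ∞) :
    ∃ a : ℝ, 0 < a ∧ x = ENNReal.ofReal a ^ d := by
  have hroot : x ^ (1 / d : ℝ) ≠ ∞ := ENNReal.rpow_ne_top_of_nonneg (by positivity) hx
  refine ⟨(x ^ (1 / d : ℝ)).toReal, ENNReal.toReal_pos (by simp [hx0, hx]) hroot, ?_⟩
  rw [ENNReal.ofReal_toReal hroot, one_div, ENNReal.rpow_inv_natCast_pow hd]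

theorem toReal_le_toReal_sub_toReal {a b c : ℝ≥0∞} (hc : c ≠ ∞) (h : a + b ≤ c) :
    a.toReal ≤ c.toReal - b.toReal := by
  have hab : a + b ≠ ∞ := ne_top_of_le_ne_top hc h
  rw [le_sub_iff_add_le, ← ENNReal.toReal_add (ENNReal.add_ne_top.1 hab).1
    (ENNReal.add_ne_top.1 hab).2]
  exact ENNReal.toReal_mono hc h

variable {α : Type*} [MeasurableSpace α] (μ : Measure α) {f : α → ℝ≥0∞}

theorem lintegral_eq_lintegral_measure_ofReal_lt (hf : Measurable f) (hf' : ∀ x, f x ≠ ∞) :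
    ∫⁻ x, f x ∂μ = ∫⁻ c in Ioi (0 : ℝ), μ {x | ENNReal.ofReal c < f x} := by
  calc ∫⁻ x, f x ∂μ = ∫⁻ x, ENNReal.ofReal (f x).toReal ∂μ := by
        simp only [ENNReal.ofReal_toReal (hf' _)]
    _ = ∫⁻ c in Ioi (0 : ℝ), μ {x | c < (f x).toReal} :=
        lintegral_eq_lintegral_meas_lt μ (.of_forall fun _ => ENNReal.toReal_nonneg)
          hf.ennreal_toReal.aemeasurable
    _ = ∫⁻ c in Ioi (0 : ℝ), μ {x | ENNReal.ofReal c < f x} :=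
        setLIntegral_congr_fun measurableSet_Ioi fun c hc => by
          simp only [ENNReal.ofReal_lt_iff_lt_toReal (le_of_lt hc) (hf' _)]

theorem lintegral_eq_iSup_lintegral_min_natCast (hf : Measurable f) :
    ∫⁻ x, f x ∂μ = ⨆ m : ℕ, ∫⁻ x, min (f x) m ∂μ := by
  rw [← lintegral_iSup fun m => hf.min measurable_const]
  · simp only [← inf_iSup_eq, ENNReal.iSup_natCast, le_top, inf_of_le_left]
  · exact fun m k hmk x => min_le_min_left _ (by exact_mod_cast hmk)

end ENNReal

/-- The measure `μ` satisfies the Prékopa–Leindler inequality with weights `s` and `t`. The weights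
are meant to be nonnegative with `s + t = 1`, but the definition does not require it. -/
def IsPrekopaLeindler {E : Type*} [AddCommMonoid E] [Module ℝ E] [MeasurableSpace E] (s t : ℝ)
    (μ : Measure E) : Prop :=
  ∀ ⦃f g h : E → ℝ≥0∞⦄, Measurable f → Measurable g → Measurable h →
    (∀ x y, f x ^ s * g y ^ t ≤ h (s • x + t • y)) →
    (∫⁻ x, f x ∂μ) ^ s * (∫⁻ x, g x ∂μ) ^ t ≤ ∫⁻ x, h x ∂μ

section PrekopaLeindlerReal

variable {s t : ℝ} {f g h : ℝ → ℝ≥0∞}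

theorem ofReal_mul_volume_lt_add_le (hs : 0 < s) (ht : 0 < t) (hst : s + t = 1)
    (hf : Measurable f) (hg : Measurable g)
    (H : ∀ x y, f x ^ s * g y ^ t ≤ h (s • x + t • y)) {c : ℝ≥0∞} (hc0 : c ≠ 0)
    (hcf : c < ⨆ x, f x) (hcg : c < ⨆ x, g x) :
    ENNReal.ofReal s * volume {x | c < f x} + ENNReal.ofReal t * volume {x | c < g x} ≤
      volume {x | c < h x} := by
  refine (ofReal_mul_volume_add_le hs ht (measurableSet_lt measurable_const hf)
    (measurableSet_lt measurable_const hg) (lt_iSup_iff.1 hcf) (lt_iSup_iff.1 hcg)).trans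
    (measure_mono ?_)
  rintro _ ⟨_, ⟨x, hx, rfl⟩, _, ⟨y, hy, rfl⟩, rfl⟩
  calc c = c ^ s * c ^ t := by
        rw [← ENNReal.rpow_add _ _ hc0 hcf.ne_top, hst, ENNReal.rpow_one]
    _ < f x ^ s * g y ^ t :=
        ENNReal.mul_lt_mul (ENNReal.rpow_lt_rpow hx hs) (ENNReal.rpow_lt_rpow hy ht)
    _ ≤ h (s • x + t • y) := H x y

theorem ofReal_mul_lintegral_add_le_of_iSup_eq_one (hs : 0 < s) (ht : 0 < t) (hst : s + t = 1)
    (hf : Measurable f) (hg : Measurable g) (hh : Measurable h)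
    (hf1 : ⨆ x, f x = 1) (hg1 : ⨆ x, g x = 1)
    (H : ∀ x y, f x ^ s * g y ^ t ≤ h (s • x + t • y)) :
    ENNReal.ofReal s * (∫⁻ x, f x) + ENNReal.ofReal t * (∫⁻ x, g x) ≤ ∫⁻ x, h x := by
  have hf_le (x : ℝ) : f x ≤ 1 := hf1 ▸ le_iSup f x
  have hg_le (x : ℝ) : g x ≤ 1 := hg1 ▸ le_iSup g x
  have ne_top {a : ℝ≥0∞} (ha : a ≤ 1) : a ≠ ∞ := ne_top_of_le_ne_top ENNReal.one_ne_top ha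
  -- The layer cake formula needs a finite integrand, so `h` is truncated at height one.
  refine le_trans ?_ (lintegral_mono fun x => min_le_left (h x) 1)
  rw [lintegral_eq_lintegral_measure_ofReal_lt _ hf fun x => ne_top (hf_le x),
    lintegral_eq_lintegral_measure_ofReal_lt _ hg fun x => ne_top (hg_le x),
    lintegral_eq_lintegral_measure_ofReal_lt _ (hh.min measurable_const) fun x =>
      ne_top (min_le_right _ _),
    ← lintegral_const_mul' _ _ ENNReal.ofReal_ne_top,
    ← lintegral_const_mul' _ _ ENNReal.ofReal_ne_top]
  refine (le_lintegral_add _ _).trans (setLIntegral_mono' measurableSet_Ioi fun c hc => ?_)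
  rcases lt_or_ge (ENNReal.ofReal c) 1 with hc1 | hc1
  · simpa only [lt_min_iff, hc1, and_true] using ofReal_mul_volume_lt_add_le hs ht hst hf hg H
      (ENNReal.ofReal_pos.2 hc).ne' (hc1.trans_eq hf1.symm) (hc1.trans_eq hg1.symm)
  · simp [((hf_le _).trans hc1).not_gt, ((hg_le _).trans hc1).not_gt]

theorem rpow_lintegral_mul_le_of_iSup_ne_top (hs : 0 < s) (ht : 0 < t) (hst : s + t = 1)
    (hf : Measurable f) (hg : Measurable g) (hh : Measurable h)
    (hfb : ⨆ x, f x ≠ ∞) (hgb : ⨆ x, g x ≠ ∞)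
    (H : ∀ x y, f x ^ s * g y ^ t ≤ h (s • x + t • y)) :
    (∫⁻ x, f x) ^ s * (∫⁻ x, g x) ^ t ≤ ∫⁻ x, h x := by
  set a := ⨆ x, f x with ha
  set b := ⨆ x, g x with hb
  rcases eq_or_ne a 0 with hf0 | hf0
  · have : ∀ x, f x = 0 := by simpa [ha] using hf0
    simp [this, hs]
  rcases eq_or_ne b 0 with hg0 | hg0
  · have : ∀ x, g x = 0 := by simpa [hb] using hg0
    simp [this, ht]
  set k := a ^ s * b ^ t
  have hk0 : k ≠ 0 := by simp [k, hf0, hg0, hfb, hgb]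
  have hk : k ≠ ∞ := ENNReal.mul_ne_top (ENNReal.rpow_ne_top_of_nonneg hs.le hfb)
    (ENNReal.rpow_ne_top_of_nonneg ht.le hgb)
  have hnormalize (u v : ℝ≥0∞) :
      (a⁻¹ * u) ^ s * (b⁻¹ * v) ^ t = k⁻¹ * (u ^ s * v ^ t) := by
    rw [ENNReal.mul_rpow_of_nonneg _ _ hs.le, ENNReal.mul_rpow_of_nonneg _ _ ht.le,
      ENNReal.inv_rpow, ENNReal.inv_rpow, ENNReal.mul_inv (by simp [hf0, hfb])
      (by simp [hg0, hgb]), mul_mul_mul_comm]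
  have hscaled : k⁻¹ * ((∫⁻ x, f x) ^ s * (∫⁻ x, g x) ^ t) ≤ k⁻¹ * ∫⁻ x, h x := by
    rw [← hnormalize, ← lintegral_const_mul _ hf, ← lintegral_const_mul _ hg,
      ← lintegral_const_mul _ hh]
    refine (rpow_mul_rpow_le_ofReal_mul_add hs ht hst _ _).trans
      (ofReal_mul_lintegral_add_le_of_iSup_eq_one hs ht hst (hf.const_mul _) (hg.const_mul _)
        (hh.const_mul _) ?_ ?_ fun x y => ?_)
    · rw [← ENNReal.mul_iSup, ← ha, ENNReal.inv_mul_cancel hf0 hfb]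
    · rw [← ENNReal.mul_iSup, ← hb, ENNReal.inv_mul_cancel hg0 hgb]
    · rw [hnormalize]
      gcongr
      exact H x y
  exact (ENNReal.mul_le_mul_iff_right (ENNReal.inv_ne_zero.2 hk) (ENNReal.inv_ne_top.2 hk0)).1
    hscaled

theorem isPrekopaLeindler_volume_real (hs : 0 < s) (ht : 0 < t) (hst : s + t = 1) :
    IsPrekopaLeindler s t (volume : Measure ℝ) := by
  intro f g h hf hg hh H
  have iSup_min_ne_top (u : ℝ → ℝ≥0∞) (m : ℕ) : ⨆ x, min (u x) m ≠ ∞ :=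
    ne_top_of_le_ne_top (ENNReal.natCast_ne_top m) (iSup_le fun x => min_le_right _ _)
  rw [lintegral_eq_iSup_lintegral_min_natCast _ hf, lintegral_eq_iSup_lintegral_min_natCast _ hg,
    rpow_iSup_eq_iSup_rpow hs, rpow_iSup_eq_iSup_rpow ht, ENNReal.iSup_mul]
  simp only [ENNReal.mul_iSup]
  refine iSup₂_le fun m k => rpow_lintegral_mul_le_of_iSup_ne_top hs ht hst
    (hf.min measurable_const) (hg.min measurable_const) hh (iSup_min_ne_top f m)
    (iSup_min_ne_top g k) fun x y => le_trans ?_ (H x y)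
  gcongr <;> exact min_le_left _ _

end PrekopaLeindlerReal

namespace IsPrekopaLeindler

variable {E F : Type*} [AddCommMonoid E] [Module ℝ E] [MeasurableSpace E]
  [AddCommMonoid F] [Module ℝ F] [MeasurableSpace F]
  {s t : ℝ} {μ : Measure E} {ν : Measure F}

theorem dirac (hst : s + t = 1) (a : E) : IsPrekopaLeindler s t (Measure.dirac a) := by
  intro f g h hf hg hh H
  simpa [lintegral_dirac', hf, hg, hh, ← add_smul, hst] using H a a

theorem map (hμ : IsPrekopaLeindler s t μ) (L : E →ₗ[ℝ] F) (hL : Measurable L) :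
    IsPrekopaLeindler s t (μ.map L) := by
  intro f g h hf hg hh H
  rw [lintegral_map hf hL, lintegral_map hg hL, lintegral_map hh hL]
  exact hμ (hf.comp hL) (hg.comp hL) (hh.comp hL) fun x y => by
    simpa only [Function.comp_apply, map_add, map_smul] using H (L x) (L y)

theorem smul_measure (hμ : IsPrekopaLeindler s t μ) (hs : 0 ≤ s) (ht : 0 ≤ t) (hst : s + t = 1)
    (c : ℝ≥0∞) : IsPrekopaLeindler s t (c • μ) := by
  intro f g h hf hg hh H
  simp only [lintegral_smul_measure, smul_eq_mul]
  calc (c * ∫⁻ x, f x ∂μ) ^ s * (c * ∫⁻ x, g x ∂μ) ^ t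
      = c ^ s * c ^ t * ((∫⁻ x, f x ∂μ) ^ s * (∫⁻ x, g x ∂μ) ^ t) := by
        rw [ENNReal.mul_rpow_of_nonneg _ _ hs, ENNReal.mul_rpow_of_nonneg _ _ ht,
          mul_mul_mul_comm]
    _ = c * ((∫⁻ x, f x ∂μ) ^ s * (∫⁻ x, g x ∂μ) ^ t) := by
        rw [← ENNReal.rpow_add_of_nonneg _ _ hs ht, hst, ENNReal.rpow_one]
    _ ≤ c * ∫⁻ x, h x ∂μ := by
        gcongr
        exact hμ hf hg hh H

theorem prod [SFinite ν] (hμ : IsPrekopaLeindler s t μ) (hν : IsPrekopaLeindler s t ν) :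
    IsPrekopaLeindler s t (μ.prod ν) := by
  intro f g h hf hg hh H
  rw [lintegral_prod _ hf.aemeasurable, lintegral_prod _ hg.aemeasurable,
    lintegral_prod _ hh.aemeasurable]
  exact hμ hf.lintegral_prod_right' hg.lintegral_prod_right' hh.lintegral_prod_right' fun x y =>
    hν (hf.comp measurable_prodMk_left) (hg.comp measurable_prodMk_left)
      (hh.comp measurable_prodMk_left) fun z w => H (x, z) (y, w)

theorem measure_rpow_mul_le (hμ : IsPrekopaLeindler s t μ) (hs : 0 < s) (ht : 0 < t) {A B : Set E}
    (hA : MeasurableSet A) (hB : MeasurableSet B) : μ A ^ s * μ B ^ t ≤ μ (s • A + t • B) := by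
  set C := toMeasurable μ (s • A + t • B)
  have hC : MeasurableSet C := measurableSet_toMeasurable _ _
  rw [← measure_toMeasurable (s • A + t • B), ← lintegral_indicator_one hA,
    ← lintegral_indicator_one hB, ← lintegral_indicator_one hC]
  refine hμ (measurable_one.indicator hA) (measurable_one.indicator hB)
    (measurable_one.indicator hC) fun x y => ?_
  by_cases hx : x ∈ A
  · by_cases hy : y ∈ B
    · have hxy : s • x + t • y ∈ C :=
        subset_toMeasurable _ _ (add_mem_add (smul_mem_smul_set hx) (smul_mem_smul_set hy))
      simp [hx, hy, hxy]
    · simp [hy, ht]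
  · simp [hx, hs]

end IsPrekopaLeindler

theorem isPrekopaLeindler_volume_pi {s t : ℝ} (hs : 0 < s) (ht : 0 < t) (hst : s + t = 1) :
    ∀ n : ℕ, IsPrekopaLeindler s t (volume : Measure (Fin n → ℝ))
  | 0 => by
    rw [Measure.volume_pi_eq_dirac 0]
    exact .dirac hst 0
  | n + 1 => by
    let L := Fin.consLinearEquiv ℝ fun _ : Fin (n + 1) => ℝ
    have hL : MeasurePreserving L := by
      convert (volume_preserving_piFinSuccAbove (fun _ : Fin (n + 1) => ℝ) 0).symm using 1
      ext p : 1
      exact (Fin.insertNth_zero' p.1 p.2).symm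
    rw [← hL.map_eq]
    exact ((isPrekopaLeindler_volume_real hs ht hst).prod
      (isPrekopaLeindler_volume_pi hs ht hst n)).map L.toLinearMap hL.measurable

section AddGroup

variable {G : Type*} [AddGroup G] [MeasurableSpace G] [MeasurableAdd G] (μ : Measure G)
  {A B : Set G}

theorem measure_le_measure_add_right [μ.IsAddRightInvariant] (hB : B.Nonempty) :
    μ A ≤ μ (A + B) := by
  obtain ⟨b, hb⟩ := hB
  calc μ A = μ (A + {b}) := by simp
    _ ≤ μ (A + B) := measure_mono <| add_subset_add_left <| singleton_subset_iff.2 hb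

theorem measure_le_measure_add_left [μ.IsAddLeftInvariant] (hA : A.Nonempty) :
    μ B ≤ μ (A + B) := by
  obtain ⟨a, ha⟩ := hA
  calc μ B = μ ({a} + B) := by simp
    _ ≤ μ (A + B) := measure_mono <| add_subset_add_right <| singleton_subset_iff.2 ha

end AddGroup

section BrunnMinkowski

variable {E : Type*} [NormedAddCommGroup E] [NormedSpace ℝ E] [FiniteDimensional ℝ E]
  [MeasurableSpace E] [BorelSpace E] (μ : Measure E) [μ.IsAddHaarMeasure]

theorem isPrekopaLeindler_of_isAddHaarMeasure {s t : ℝ} (hs : 0 < s) (ht : 0 < t)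
    (hst : s + t = 1) : IsPrekopaLeindler s t μ := by
  let L : (Fin (finrank ℝ E) → ℝ) ≃L[ℝ] E := .ofFinrankEq (by simp)
  have : (Measure.map L volume).IsAddHaarMeasure := L.isAddHaarMeasure_map volume
  rw [Measure.isAddLeftInvariant_eq_smul μ (Measure.map L volume)]
  exact ((isPrekopaLeindler_volume_pi hs ht hst _).map L.toLinearMap
    L.continuous.measurable).smul_measure hs.le ht.le hst _

variable {A B : Set E}

theorem addHaar_inv_smul_eq_one {a : ℝ} (ha : 0 < a)
    (hA : μ A = ENNReal.ofReal a ^ finrank ℝ E) : μ (a⁻¹ • A) = 1 := by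
  rw [Measure.addHaar_smul_of_nonneg _ (by positivity), hA, ← ENNReal.ofReal_pow ha.le,
    ← ENNReal.ofReal_mul (by positivity), inv_pow, inv_mul_cancel₀ (by positivity),
    ENNReal.ofReal_one]

theorem ofReal_add_pow_le_addHaar_add {a b : ℝ} (ha : 0 < a) (hb : 0 < b)
    (hA : MeasurableSet A) (hB : MeasurableSet B)
    (hμA : μ A = ENNReal.ofReal a ^ finrank ℝ E) (hμB : μ B = ENNReal.ofReal b ^ finrank ℝ E) :
    ENNReal.ofReal (a + b) ^ finrank ℝ E ≤ μ (A + B) := by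
  have hs : 0 < a / (a + b) := by positivity
  have ht : 0 < b / (a + b) := by positivity
  have hst : a / (a + b) + b / (a + b) = 1 := by field_simp
  have hcombo : (a / (a + b)) • a⁻¹ • A + (b / (a + b)) • b⁻¹ • B = (a + b)⁻¹ • (A + B) := by
    rw [smul_smul, smul_smul, smul_add]
    congr 2 <;> field_simp
  have hone : 1 ≤ μ ((a + b)⁻¹ • (A + B)) := by
    simpa only [addHaar_inv_smul_eq_one μ ha hμA, addHaar_inv_smul_eq_one μ hb hμB,
      ENNReal.one_rpow, mul_one, hcombo] using
      (isPrekopaLeindler_of_isAddHaarMeasure μ hs ht hst).measure_rpow_mul_le hs ht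
        (hA.const_smul_of_ne_zero (inv_ne_zero ha.ne'))
        (hB.const_smul_of_ne_zero (inv_ne_zero hb.ne'))
  calc ENNReal.ofReal (a + b) ^ finrank ℝ E
      = ENNReal.ofReal ((a + b) ^ finrank ℝ E) * 1 := by
        rw [mul_one, ENNReal.ofReal_pow (by positivity)]
    _ ≤ ENNReal.ofReal ((a + b) ^ finrank ℝ E) * μ ((a + b)⁻¹ • (A + B)) := by gcongr
    _ = μ ((a + b) • (a + b)⁻¹ • (A + B)) :=
        (Measure.addHaar_smul_of_nonneg μ (by positivity) _).symm
    _ = μ (A + B) := by rw [smul_inv_smul₀ (by positivity)]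

theorem brunn_minkowski [Nontrivial E] (hA : NullMeasurableSet A μ) (hB : NullMeasurableSet B μ)
    (hAne : A.Nonempty) (hBne : B.Nonempty) :
    μ A ^ (1 / finrank ℝ E : ℝ) + μ B ^ (1 / finrank ℝ E : ℝ) ≤
      μ (A + B) ^ (1 / finrank ℝ E : ℝ) := by
  have hd : finrank ℝ E ≠ 0 := finrank_pos.ne'
  have hd' : 0 < (1 / finrank ℝ E : ℝ) := by positivity
  have hAle : μ A ≤ μ (A + B) := measure_le_measure_add_right μ hBne
  have hBle : μ B ≤ μ (A + B) := measure_le_measure_add_left μ hAne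
  by_cases hzero : μ A = 0 ∨ μ B = 0
  · rcases hzero with h | h
    · rw [h, ENNReal.zero_rpow_of_pos hd', zero_add]
      gcongr
    · rw [h, ENNReal.zero_rpow_of_pos hd', add_zero]
      gcongr
  by_cases htop : μ A = ∞ ∨ μ B = ∞
  · have : μ (A + B) = ∞ := by rcases htop with h | h <;> simp_all
    rw [this, ENNReal.top_rpow_of_pos hd']
    exact le_top
  push Not at hzero htop
  obtain ⟨a, ha, hμA⟩ := exists_pos_eq_ofReal_pow hd hzero.1 htop.1
  obtain ⟨b, hb, hμB⟩ := exists_pos_eq_ofReal_pow hd hzero.2 htop.2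
  obtain ⟨A₀, hA₀A, hA₀, hA₀_ae⟩ := hA.exists_measurable_subset_ae_eq
  obtain ⟨B₀, hB₀B, hB₀, hB₀_ae⟩ := hB.exists_measurable_subset_ae_eq
  have hroot (x : ℝ≥0∞) : (x ^ finrank ℝ E) ^ (1 / finrank ℝ E : ℝ) = x := by
    rw [one_div, ENNReal.pow_rpow_inv_natCast hd]
  calc μ A ^ (1 / finrank ℝ E : ℝ) + μ B ^ (1 / finrank ℝ E : ℝ)
      = (ENNReal.ofReal (a + b) ^ finrank ℝ E) ^ (1 / finrank ℝ E : ℝ) := by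
        rw [hμA, hμB, hroot, hroot, hroot, ENNReal.ofReal_add ha.le hb.le]
    _ ≤ μ (A₀ + B₀) ^ (1 / finrank ℝ E : ℝ) := by
        gcongr
        exact ofReal_add_pow_le_addHaar_add μ ha hb hA₀ hB₀ ((measure_congr hA₀_ae).trans hμA)
          ((measure_congr hB₀_ae).trans hμB)
    _ ≤ μ (A + B) ^ (1 / finrank ℝ E : ℝ) := by gcongr

end BrunnMinkowski

section MinkDiff

variable {n : ℕ} {K S T : Set (EuclideanSpace ℝ (Fin n))}

theorem minkDiff_anti_right (hST : S ⊆ T) : minkDiff K T ⊆ minkDiff K S :=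
  fun _ hx b hb => hx b (hST hb)

theorem minkDiff_sub_subset_interior : minkDiff K T - T ⊆ interior K := by
  rintro _ ⟨x, hx, b, hb, rfl⟩
  exact hx b hb

theorem minkDiff_eq_compl_add : minkDiff K T = ((interior K)ᶜ + T)ᶜ := by
  ext x
  refine ⟨?_, fun hx b hb => ?_⟩
  · rintro hx ⟨u, hu, b, hb, rfl⟩
    exact hu (by simpa using hx b hb)
  · by_contra hu
    exact hx ⟨x - b, hu, b, hb, sub_add_cancel x b⟩

theorem isOpen_minkDiff (hT : IsCompact T) : IsOpen (minkDiff K T) := by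
  rw [minkDiff_eq_compl_add, isOpen_compl_iff]
  exact isOpen_interior.isClosed_compl.add_right_of_isCompact hT

theorem volume_minkDiff_rpow_add_le_of_isCompact (hn : n ≠ 0) (hT : IsCompact T)
    (hTne : T.Nonempty) (hne : (minkDiff K T).Nonempty) :
    volume (minkDiff K T) ^ (1 / n : ℝ) + volume T ^ (1 / n : ℝ) ≤ volume K ^ (1 / n : ℝ) := by
  have : NeZero n := ⟨hn⟩
  calc volume (minkDiff K T) ^ (1 / n : ℝ) + volume T ^ (1 / n : ℝ)
      = volume (minkDiff K T) ^ (1 / n : ℝ) + volume (-T) ^ (1 / n : ℝ) := by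
        rw [Measure.measure_neg]
    _ ≤ volume (minkDiff K T + -T) ^ (1 / n : ℝ) := by
        simpa only [finrank_euclideanSpace_fin] using brunn_minkowski volume
          (isOpen_minkDiff hT).measurableSet.nullMeasurableSet
          hT.neg.measurableSet.nullMeasurableSet hne hTne.neg
    _ ≤ volume K ^ (1 / n : ℝ) := by
        rw [← sub_eq_add_neg]
        gcongr
        exact minkDiff_sub_subset_interior.trans interior_subset

/-- For general `T` the set `K ⊖ T` need not be measurable, but it is contained in the open sets
`K ⊖ S` with `S ⊆ T` compact, and these `S` exhaust the volume of `T`. -/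
theorem minkDiff_volume_bound_general (hn : n ≠ 0) (hT : NullMeasurableSet T)
    (hTne : T.Nonempty) (hne : (minkDiff K T).Nonempty) :
    volume (minkDiff K T) ^ (1 / n : ℝ) + volume T ^ (1 / n : ℝ) ≤ volume K ^ (1 / n : ℝ) := by
  have hp : 0 < (1 / n : ℝ) := by positivity
  obtain ⟨T₀, hT₀T, hT₀, hT₀_ae⟩ := hT.exists_measurable_subset_ae_eq
  rw [← measure_congr hT₀_ae, hT₀.measure_eq_iSup_isCompact]
  simp only [rpow_iSup_eq_iSup_rpow hp, iSup_and']
  rw [ENNReal.add_biSup' ⟨∅, by simp⟩]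
  obtain ⟨b, hb⟩ := hTne
  refine iSup₂_le fun S ⟨hST₀, hS⟩ => ?_
  have hsub : minkDiff K T ⊆ minkDiff K (insert b S) :=
    minkDiff_anti_right (insert_subset hb (hST₀.trans hT₀T))
  calc volume (minkDiff K T) ^ (1 / n : ℝ) + volume S ^ (1 / n : ℝ)
      ≤ volume (minkDiff K (insert b S)) ^ (1 / n : ℝ) + volume (insert b S) ^ (1 / n : ℝ) := by
        gcongr
        exact subset_insert b S
    _ ≤ volume K ^ (1 / n : ℝ) := volume_minkDiff_rpow_add_le_of_isCompact hn (hS.insert b)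
        (insert_nonempty b S) (hne.mono hsub)

end MinkDiff

theorem minkDiff_volume_bound (n : ℕ) (hn : 1 ≤ n)
    (K T : Set (EuclideanSpace ℝ (Fin n)))
    (hK : IsCompact K) (hT : IsCompact T) (hTne : T.Nonempty)
    (hne : (minkDiff K T).Nonempty) :
    (volume (minkDiff K T)).toReal ^ ((1 : ℝ) / n) ≤
      (volume K).toReal ^ ((1 : ℝ) / n) - (volume T).toReal ^ ((1 : ℝ) / n) := by
  simpa only [ENNReal.toReal_rpow] using toReal_le_toReal_sub_toReal
    (ENNReal.rpow_ne_top_of_nonneg (by positivity) hK.measure_lt_top.ne)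
    (minkDiff_volume_bound_general (by omega) hT.measurableSet.nullMeasurableSet hTne hne)
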